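/- arXiv:math/0412166 — 2 statements merged into one kernel-verified Lean document; each statement's English description precedes it below -/
import Mathlib

section
/- Let (Ω, μ) be a probability space, F : Ω → Ω a measure-preserving map, and 𝓛 : L²(μ) → L²(μ) a linear map satisfying ∫ (𝓛g)·h dμ = ∫ g·(h∘F) dμ for all g, h ∈ L²(μ). Then for every v ∈ L²(μ) and every integer N ≥ 1: ∫∫ (v(y) − v(y′))² dμ(y) dμ(y′) = 2 Σ_{k=0}^{N−1} ∫ ((𝓛^k v)(y) − ((𝓛^{k+1} v)∘F)(y))² dμ(y) + ∫∫ ((𝓛^N v)(y) − (𝓛^N v)(y′))² dμ(y) dμ(y′). -/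
open MeasureTheory

/-!
The double integral `∬ ‖w y - w y'‖²` equals `2 (μ(Ω) ∫ ‖w‖² - ‖∫ w‖²)`. By duality, `𝓛` is the
adjoint of the isometry `K h = h ∘ F` of `L²`. Since `K` fixes constants, `𝓛` preserves the mean;
since `K 𝓛` is an orthogonal projection, `‖g - K (𝓛 g)‖² = ‖g‖² - ‖𝓛 g‖²`. Hence passing from `g`
to `𝓛 g` lowers the double integral by `2 μ(Ω) ‖g - K (𝓛 g)‖²`, and the sum over the iterates
`g = 𝓛ᵏ v` telescopes.
-/

section

open scoped InnerProductSpace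

variable {Ω Ω' E : Type*} [MeasurableSpace Ω] [MeasurableSpace Ω'] {μ : Measure Ω} {ν : Measure Ω'}
  [NormedAddCommGroup E] [InnerProductSpace ℝ E]

lemma norm_sq_eq_integral_norm_sq (f : Lp E 2 μ) : ‖f‖ ^ 2 = ∫ x, ‖f x‖ ^ 2 ∂μ := by
  simp only [← real_inner_self_eq_norm_sq, L2.inner_def]

lemma integral_prod_norm_sub_sq [CompleteSpace E] [IsFiniteMeasure μ] {w : Ω → E}
    (hw : MemLp w 2 μ) :
    ∫ p : Ω × Ω, ‖w p.1 - w p.2‖ ^ 2 ∂(μ.prod μ) =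
      2 * (μ.real Set.univ * ∫ x, ‖w x‖ ^ 2 ∂μ - ‖∫ x, w x ∂μ‖ ^ 2) := by
  have hw_int : Integrable w μ := hw.integrable one_le_two
  have hsq : Integrable (fun x ↦ ‖w x‖ ^ 2) μ := hw.integrable_norm_pow two_ne_zero
  have hcross : Integrable (fun p : Ω × Ω ↦ ⟪w p.1, w p.2⟫_ℝ) (μ.prod μ) :=
    hw_int.op_fst_snd continuous_inner ⟨1, fun a b ↦ by simpa using abs_real_inner_le_norm a b⟩
      hw_int
  have hcross_eq : ∫ p : Ω × Ω, ⟪w p.1, w p.2⟫_ℝ ∂(μ.prod μ) = ‖∫ x, w x ∂μ‖ ^ 2 :=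
    (integral_prod_bilin (innerSL ℝ) hw_int hw_int).trans (real_inner_self_eq_norm_sq _)
  calc ∫ p : Ω × Ω, ‖w p.1 - w p.2‖ ^ 2 ∂(μ.prod μ)
      = ∫ p : Ω × Ω, (‖w p.1‖ ^ 2 + ‖w p.2‖ ^ 2 - 2 * ⟪w p.1, w p.2⟫_ℝ) ∂(μ.prod μ) := by
        simp only [norm_sub_sq_real, sub_add_eq_add_sub]
    _ = μ.real Set.univ * ∫ x, ‖w x‖ ^ 2 ∂μ + μ.real Set.univ * ∫ x, ‖w x‖ ^ 2 ∂μ -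
          2 * ‖∫ x, w x ∂μ‖ ^ 2 := by
        rw [integral_sub ((hsq.comp_fst μ).fun_add (hsq.comp_snd μ)) (hcross.const_mul 2),
          integral_add (hsq.comp_fst μ) (hsq.comp_snd μ), integral_const_mul, hcross_eq,
          integral_fun_fst (fun x ↦ ‖w x‖ ^ 2), integral_fun_snd (fun x ↦ ‖w x‖ ^ 2), smul_eq_mul]
    _ = 2 * (μ.real Set.univ * ∫ x, ‖w x‖ ^ 2 ∂μ - ‖∫ x, w x ∂μ‖ ^ 2) := by ring

/-- `L` is a transfer operator of `F` from `L²(μ; E)` to `L²(ν; E)`: it is dual to composition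
with `F`. For measure-preserving `F` this duality makes `L` linear, so `L` is taken to be a mere
function. -/
def IsTransferOperator (μ : Measure Ω) (ν : Measure Ω') (F : Ω → Ω') (L : Lp E 2 μ → Lp E 2 ν) :
    Prop :=
  ∀ (g : Lp E 2 μ) (h : Lp E 2 ν), ∫ y, ⟪L g y, h y⟫_ℝ ∂ν = ∫ x, ⟪g x, h (F x)⟫_ℝ ∂μ

namespace IsTransferOperator

variable {F : Ω → Ω'} {L : Lp E 2 μ → Lp E 2 ν}

lemma inner_apply_left (hL : IsTransferOperator μ ν F L) (hF : MeasurePreserving F μ ν)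
    (g : Lp E 2 μ) (h : Lp E 2 ν) : ⟪L g, h⟫_ℝ = ⟪g, Lp.compMeasurePreserving F hF h⟫_ℝ := by
  rw [L2.inner_def, L2.inner_def, hL g h]
  refine integral_congr_ae ?_
  filter_upwards [Lp.coeFn_compMeasurePreserving h hF] with x hx
  rw [hx, Function.comp_apply]

lemma integral_norm_sub_comp_sq (hL : IsTransferOperator μ ν F L) (hF : MeasurePreserving F μ ν)
    (g : Lp E 2 μ) :
    ∫ x, ‖g x - L g (F x)‖ ^ 2 ∂μ = ∫ x, ‖g x‖ ^ 2 ∂μ - ∫ y, ‖L g y‖ ^ 2 ∂ν := by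
  set KLg : Lp E 2 μ := Lp.compMeasurePreserving F hF (L g)
  have hnorm : ‖KLg‖ = ‖L g‖ := Lp.norm_compMeasurePreserving _ hF
  have hinner : ⟪g, KLg⟫_ℝ = ‖L g‖ ^ 2 := by
    rw [← hL.inner_apply_left hF, real_inner_self_eq_norm_sq]
  calc ∫ x, ‖g x - L g (F x)‖ ^ 2 ∂μ
      = ‖g - KLg‖ ^ 2 := by
        rw [norm_sq_eq_integral_norm_sq]
        refine integral_congr_ae ?_
        filter_upwards [Lp.coeFn_sub g KLg, Lp.coeFn_compMeasurePreserving (L g) hF] with x hsub hK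
        rw [hsub, Pi.sub_apply, hK, Function.comp_apply]
    _ = ‖g‖ ^ 2 - ‖L g‖ ^ 2 := by
        rw [norm_sub_sq_real, hinner, hnorm]
        ring
    _ = ∫ x, ‖g x‖ ^ 2 ∂μ - ∫ y, ‖L g y‖ ^ 2 ∂ν := by
        rw [norm_sq_eq_integral_norm_sq, norm_sq_eq_integral_norm_sq]

lemma integral_apply [CompleteSpace E] [IsFiniteMeasure μ] [IsFiniteMeasure ν]
    (hL : IsTransferOperator μ ν F L) (hF : MeasurePreserving F μ ν) (g : Lp E 2 μ) :
    ∫ y, L g y ∂ν = ∫ x, g x ∂μ := by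
  refine ext_inner_left ℝ fun c ↦ ?_
  have hconst : Lp.const 2 ν c =ᵐ[ν] fun _ ↦ c := Lp.coeFn_const 2 ν c
  calc ⟪c, ∫ y, L g y ∂ν⟫_ℝ
      = ∫ y, ⟪L g y, Lp.const 2 ν c y⟫_ℝ ∂ν := by
        rw [← integral_inner ((Lp.memLp (L g)).integrable one_le_two)]
        refine integral_congr_ae ?_
        filter_upwards [hconst] with y hy
        rw [hy, real_inner_comm]
    _ = ∫ x, ⟪g x, Lp.const 2 ν c (F x)⟫_ℝ ∂μ := hL g _
    _ = ⟪c, ∫ x, g x ∂μ⟫_ℝ := by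
        rw [← integral_inner ((Lp.memLp g).integrable one_le_two)]
        refine integral_congr_ae ?_
        filter_upwards [hF.quasiMeasurePreserving.ae hconst] with x hx
        rw [hx, real_inner_comm]

lemma integral_prod_norm_sub_sq_eq_add [CompleteSpace E] [IsFiniteMeasure μ] [IsFiniteMeasure ν]
    (hL : IsTransferOperator μ ν F L) (hF : MeasurePreserving F μ ν) (g : Lp E 2 μ) :
    ∫ p : Ω × Ω, ‖g p.1 - g p.2‖ ^ 2 ∂(μ.prod μ) =
      2 * μ.real Set.univ * ∫ x, ‖g x - L g (F x)‖ ^ 2 ∂μ +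
        ∫ q : Ω' × Ω', ‖L g q.1 - L g q.2‖ ^ 2 ∂(ν.prod ν) := by
  have hmass : μ.real Set.univ = ν.real Set.univ :=
    hF.measureReal_preimage MeasurableSet.univ.nullMeasurableSet
  rw [integral_prod_norm_sub_sq (Lp.memLp g), integral_prod_norm_sub_sq (Lp.memLp (L g)),
    hL.integral_norm_sub_comp_sq hF, hL.integral_apply hF, hmass]
  ring

end IsTransferOperator

theorem stmt7_general [CompleteSpace E] [IsFiniteMeasure μ] {F : Ω → Ω}
    (hF : MeasurePreserving F μ μ) {L : Lp E 2 μ → Lp E 2 μ} (hL : IsTransferOperator μ μ F L)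
    (v : Lp E 2 μ) (N : ℕ) :
    ∫ p : Ω × Ω, ‖v p.1 - v p.2‖ ^ 2 ∂(μ.prod μ) =
      2 * μ.real Set.univ *
          ∑ k ∈ Finset.range N, ∫ x, ‖(L^[k] v) x - (L^[k + 1] v) (F x)‖ ^ 2 ∂μ +
        ∫ p : Ω × Ω, ‖(L^[N] v) p.1 - (L^[N] v) p.2‖ ^ 2 ∂(μ.prod μ) := by
  induction N with
  | zero => simp
  | succ N ih =>
    rw [ih, Finset.sum_range_succ, hL.integral_prod_norm_sub_sq_eq_add hF (L^[N] v),
      Function.iterate_succ_apply']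
    ring

end

/-- For a transfer operator `𝓛` dual to a measure-preserving map `F` on a probability
space, any `v ∈ L²(μ)` and any `N ≥ 1`:
`∫∫ (v y - v y')² = 2 ∑_{k=0}^{N-1} ∫ ((𝓛^k v) y - (𝓛^{k+1} v)(F y))² dμ(y)
  + ∫∫ ((𝓛^N v) y - (𝓛^N v) y')²`. -/
theorem stmt7 {Ω : Type*} [MeasurableSpace Ω] (μ : Measure Ω) [IsProbabilityMeasure μ]
    (F : Ω → Ω) (hF : MeasurePreserving F μ μ)
    (L : Lp ℝ 2 μ →ₗ[ℝ] Lp ℝ 2 μ)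
    (hdual : ∀ g h : Lp ℝ 2 μ,
      ∫ x, (L g : Ω → ℝ) x * (h : Ω → ℝ) x ∂μ =
        ∫ x, (g : Ω → ℝ) x * (h : Ω → ℝ) (F x) ∂μ) :
    ∀ (v : Lp ℝ 2 μ) (N : ℕ), 1 ≤ N →
      ∫ p : Ω × Ω, ((v : Ω → ℝ) p.1 - (v : Ω → ℝ) p.2) ^ 2 ∂(μ.prod μ) =
        2 * (∑ k ∈ Finset.range N,
            ∫ x, (((⇑L)^[k] v : Ω → ℝ) x - ((⇑L)^[k + 1] v : Ω → ℝ) (F x)) ^ 2 ∂μ) +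
          ∫ p : Ω × Ω,
            (((⇑L)^[N] v : Ω → ℝ) p.1 - ((⇑L)^[N] v : Ω → ℝ) p.2) ^ 2 ∂(μ.prod μ) := by
  intro v N _
  simpa using stmt7_general hF (fun g h ↦ by simpa [mul_comm] using hdual g h) v N
end

section
/- Fix an integer p₀ ≥ 1 and define ℓ : {1,2,3,…} → {0,1,2,…} by ℓ(k) = k − 1 if k ≤ p₀·log(1+k), and ℓ(k) = p₀·⌊log(1+k)⌋ otherwise (natural logarithm). For an integer l ≥ 2, let p*(l) be the largest integer q ≥ 1 such that q + ℓ(q) < l. Then there exists a constant c₁ ≥ 0, depending only on p₀, such that ℓ(p*(l)) ≥ ℓ(l) − c₁ for every integer l ≥ 2. -/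
/-!
The function `ℓ` stays within a bounded distance of `p₀ log(1+k)`: it never exceeds it, and it falls
short of it by at most `p₀² + 1`. In the branch `ℓ(k) = k - 1` the lower bound comes from
`p₀ log(1+k) ≤ 2 p₀ √k ≤ k + p₀²`. Now let `q = p*(l)`. As `ℓ(k) ≤ k`, maximality of `q` gives
`l ≤ (q+1) + ℓ(q+1) ≤ 2(q+1)`, so `log(1+l)` exceeds `log(1+q)` by at most `log 3`.
-/

/-- The truncation function `ℓ` from (5.2): `ℓ(k) = k - 1` if `k ≤ p₀ log(1+k)`,
and `ℓ(k) = p₀ ⌊log(1+k)⌋` otherwise. -/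
noncomputable def ell (p₀ : ℕ) (k : ℕ) : ℕ :=
  if (k : ℝ) ≤ (p₀ : ℝ) * Real.log (1 + (k : ℝ)) then k - 1
  else p₀ * ⌊Real.log (1 + (k : ℝ))⌋₊

/-- `p*(l)`: the largest integer `q ≥ 1` with `q + ℓ(q) < l`. -/
noncomputable def pstar (p₀ l : ℕ) : ℕ :=
  sSup {q : ℕ | 1 ≤ q ∧ q + ell p₀ q < l}

lemma log_one_add_le_two_mul_sqrt {x : ℝ} (hx : 0 ≤ x) : Real.log (1 + x) ≤ 2 * √x := by
  have hsqrt : 0 ≤ √x := Real.sqrt_nonneg x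
  calc Real.log (1 + x) ≤ Real.log ((1 + √x) ^ 2) :=
        Real.log_le_log (by positivity) (by linarith [Real.sq_sqrt hx, add_sq 1 (√x)])
    _ = 2 * Real.log (1 + √x) := by rw [Real.log_pow, Nat.cast_ofNat]
    _ ≤ 2 * √x := by linarith [Real.log_le_sub_one_of_pos (x := 1 + √x) (by positivity)]

lemma mul_log_one_add_le_add_sq {a x : ℝ} (ha : 0 ≤ a) (hx : 0 ≤ x) :
    a * Real.log (1 + x) ≤ x + a ^ 2 :=
  calc a * Real.log (1 + x) ≤ a * (2 * √x) := by
        gcongr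
        exact log_one_add_le_two_mul_sqrt hx
    _ = 2 * √x * a := by ring
    _ ≤ √x ^ 2 + a ^ 2 := two_mul_le_add_sq (√x) a
    _ = x + a ^ 2 := by rw [Real.sq_sqrt hx]

lemma le_add_ell_of_pstar_lt {p₀ l q : ℕ} (hq : pstar p₀ l < q) : l ≤ q + ell p₀ q := by
  by_contra! hlt
  have hbdd : BddAbove {q : ℕ | 1 ≤ q ∧ q + ell p₀ q < l} :=
    ⟨l, fun _ h => (Nat.le_add_right _ _).trans h.2.le⟩
  exact hq.not_ge (le_csSup hbdd ⟨Nat.one_le_of_lt hq, hlt⟩)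

section

variable (p₀ : ℕ)

lemma ell_le_mul_log (k : ℕ) : (ell p₀ k : ℝ) ≤ p₀ * Real.log (1 + k) := by
  unfold ell
  split_ifs with h
  · exact (Nat.cast_le.mpr (Nat.sub_le k 1)).trans h
  · have hlog : 0 ≤ Real.log (1 + (k : ℝ)) := Real.log_nonneg (by simp)
    push_cast
    gcongr
    exact Nat.floor_le hlog

lemma mul_log_le_ell_add (k : ℕ) :
    p₀ * Real.log (1 + k) ≤ ell p₀ k + ((p₀ : ℝ) ^ 2 + 1) := by
  unfold ell
  split_ifs with h
  · have hk : (k : ℝ) ≤ (k - 1 : ℕ) + 1 := by exact_mod_cast (le_tsub_add : k ≤ k - 1 + 1)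
    linarith [mul_log_one_add_le_add_sq p₀.cast_nonneg (k.cast_nonneg : (0 : ℝ) ≤ k)]
  · have hfloor : p₀ * Real.log (1 + k) ≤ p₀ * (⌊Real.log (1 + (k : ℝ))⌋₊ + 1) := by
      gcongr
      exact (Nat.lt_floor_add_one _).le
    have hp₀ : (p₀ : ℝ) ≤ p₀ ^ 2 := by exact_mod_cast Nat.le_self_pow two_ne_zero p₀
    push_cast
    linarith

lemma ell_le_self (k : ℕ) : ell p₀ k ≤ k := by
  by_cases h : (k : ℝ) ≤ p₀ * Real.log (1 + k)
  · rw [ell, if_pos h]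
    exact Nat.sub_le k 1
  · exact_mod_cast (ell_le_mul_log p₀ k).trans (not_le.mp h).le

lemma le_two_mul_pstar_add_one (l : ℕ) : l ≤ 2 * (pstar p₀ l + 1) := by
  have hmax := le_add_ell_of_pstar_lt (Nat.lt_succ_self (pstar p₀ l))
  have hself := ell_le_self p₀ (pstar p₀ l + 1)
  lia

lemma log_one_add_le_log_one_add_pstar (l : ℕ) :
    Real.log (1 + l) ≤ Real.log (1 + pstar p₀ l) + Real.log 3 := by
  have hl : (l : ℝ) ≤ 2 * (pstar p₀ l + 1) := by exact_mod_cast le_two_mul_pstar_add_one p₀ l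
  rw [← Real.log_mul (by positivity) (by norm_num)]
  exact Real.log_le_log (by positivity) (by linarith [(pstar p₀ l).cast_nonneg (α := ℝ)])

end

/-- There is a constant `c₁ ≥ 0`, depending only on `p₀`, such that
`ℓ(p*(l)) ≥ ℓ(l) - c₁` for every integer `l ≥ 2`. -/
theorem stmt12 (p₀ : ℕ) (hp₀ : 1 ≤ p₀) :
    ∃ c₁ : ℝ, 0 ≤ c₁ ∧ ∀ l : ℕ, 2 ≤ l →
      (ell p₀ (pstar p₀ l) : ℝ) ≥ (ell p₀ l : ℝ) - c₁ := by
  refine ⟨p₀ ^ 2 + 1 + p₀ * Real.log 3, by positivity, fun l _ => ?_⟩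
  rw [ge_iff_le, sub_le_iff_le_add]
  calc (ell p₀ l : ℝ) ≤ p₀ * Real.log (1 + l) := ell_le_mul_log p₀ l
    _ ≤ p₀ * (Real.log (1 + pstar p₀ l) + Real.log 3) := by
        gcongr
        exact log_one_add_le_log_one_add_pstar p₀ l
    _ = p₀ * Real.log (1 + pstar p₀ l) + p₀ * Real.log 3 := mul_add _ _ _
    _ ≤ ell p₀ (pstar p₀ l) + (p₀ ^ 2 + 1) + p₀ * Real.log 3 := by
        gcongr
        exact mul_log_le_ell_add p₀ (pstar p₀ l)
    _ = ell p₀ (pstar p₀ l) + (p₀ ^ 2 + 1 + p₀ * Real.log 3) := add_assoc _ _ _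
end
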